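/- For every holomorphic function φ on the open unit disc 𝔻 that is square-integrable, and every z ∈ 𝔻, the principal-value integral ∬_𝔻 conj(φ(w)) / (z − w)² d²w vanishes. -/

import Mathlib

open Filter MeasureTheory

lemma integral_eq_zero_of_circleAverage (f : ℂ → ℂ) (c : ℂ)
    (h : ∀ r : ℝ, 0 < r → Real.circleAverage f c r = 0) : ∫ w, f w = 0 := by
  have h1 : ∫ w, f w = ∫ w, f (w + c) := (integral_add_right_eq_self f c).symm
  rw [h1, ← Complex.integral_comp_polarCoord_symm]
  by_cases hi : IntegrableOn (fun p : ℝ × ℝ => p.1 • f (Complex.polarCoord.symm p + c))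
      polarCoord.target (volume.prod volume)
  swap
  · exact integral_undef hi
  rw [polarCoord_target] at hi ⊢
  rw [Measure.volume_eq_prod, setIntegral_prod _ hi]
  refine setIntegral_eq_zero_of_forall_eq_zero fun r hr => ?_
  have hr' : 0 < r := hr
  simp only [integral_smul]
  have h2 := h r hr'
  rw [Real.circleAverage_def, smul_eq_zero] at h2
  have h3 : ∫ θ in (0:ℝ)..2 * Real.pi, f (circleMap c r θ) = 0 := by
    refine h2.resolve_left (by positivity)
  have hper : Function.Periodic (fun θ => f (circleMap c r θ)) (2 * Real.pi) :=
    fun θ => by simp only [periodic_circleMap c r θ]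
  have h4 := hper.intervalIntegral_add_eq 0 (-Real.pi)
  rw [zero_add, h3, show -Real.pi + 2 * Real.pi = Real.pi by ring,
    intervalIntegral.integral_of_le (by linarith [Real.pi_pos]), integral_Ioc_eq_integral_Ioo] at h4
  have : ∀ θ : ℝ, f (Complex.polarCoord.symm (r, θ) + c) = f (circleMap c r θ) := by
    intro θ
    rw [Complex.polarCoord_symm_apply, circleMap, Complex.exp_mul_I, add_comm c]
    push_cast
    rfl
  simp only [this, ← h4, smul_zero]

lemma integral_fderiv_zero (u : ℂ → ℂ) (hu : ContDiff ℝ 1 u) (hc : HasCompactSupport u) (v : ℂ) :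
    Integrable (fun w => fderiv ℝ u w v) ∧ ∫ w, fderiv ℝ u w v = 0 := by
  have hi : Integrable (fun w => fderiv ℝ u w v) := by
    apply Continuous.integrable_of_hasCompactSupport
    · exact (hu.continuous_fderiv one_ne_zero).clm_apply continuous_const
    · exact hc.fderiv_apply (𝕜 := ℝ) v
  refine ⟨hi, ?_⟩
  have hi0 : Integrable u := hu.continuous.integrable_of_hasCompactSupport hc
  have := integral_mul_fderiv_eq_neg_fderiv_mul_of_integrable (μ := (volume : Measure ℂ))
    (f := fun _ : ℂ => (1:ℂ)) (g := u) (v := v) (by simp) (by simpa using hi) (by simpa using hi0)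
    (fun x _ => by fun_prop) (fun x _ => (hu.differentiable one_ne_zero) x)
  simpa using this

lemma hasFDerivAt_radial (a : ℝ → ℝ) (c w : ℂ) (ha : DifferentiableAt ℝ a (‖w - c‖ ^ 2)) :
    ∃ L : ℂ →L[ℝ] ℂ, HasFDerivAt (fun w : ℂ => (a (‖w - c‖ ^ 2) : ℂ)) L w ∧
      L 1 + Complex.I * L Complex.I = 2 * ((deriv a (‖w - c‖ ^ 2) : ℝ) : ℂ) * (w - c) := by
  have h1 := (((hasFDerivAt_id (𝕜 := ℝ) w).sub_const c).norm_sq)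
  have h2 := ha.hasDerivAt.comp_hasFDerivAt w h1
  refine ⟨_, Complex.ofRealCLM.hasFDerivAt.comp w h2, ?_⟩
  simp only [id, ContinuousLinearMap.comp_apply, smul_apply, innerSL_apply_apply,
    Complex.inner, Complex.ofRealCLM_apply, ContinuousLinearMap.id_apply]
  apply Complex.ext <;> simp <;> ring

lemma dbar_calc (P : ℂ → ℂ) (a b : ℝ → ℝ) (c z w : ℂ) (hP : DifferentiableAt ℂ P w)
    (ha : DifferentiableAt ℝ a (‖w - c‖ ^ 2)) (hb : DifferentiableAt ℝ b (‖w - z‖ ^ 2)) :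
    let u : ℂ → ℂ := fun w => P w * ((a (‖w - c‖ ^ 2) : ℂ) * (b (‖w - z‖ ^ 2) : ℂ))
    fderiv ℝ u w 1 + Complex.I * fderiv ℝ u w Complex.I =
      2 * P w * (((deriv a (‖w - c‖ ^ 2) : ℝ) : ℂ) * (w - c) * (b (‖w - z‖ ^ 2) : ℂ)
        + (a (‖w - c‖ ^ 2) : ℂ) * ((deriv b (‖w - z‖ ^ 2) : ℝ) : ℂ) * (w - z)) := by
  intro u
  obtain ⟨La, hLa, ea⟩ := hasFDerivAt_radial a c w ha
  obtain ⟨Lb, hLb, eb⟩ := hasFDerivAt_radial b z w hb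
  have hp := hP.hasDerivAt.hasFDerivAt.restrictScalars ℝ
  have hu : HasFDerivAt u _ w := hp.mul (hLa.mul hLb)
  rw [hu.fderiv]
  simp only [add_apply, smul_apply, smul_eq_mul,
    ContinuousLinearMap.coe_restrictScalars', ContinuousLinearMap.toSpanSingleton_apply]
  linear_combination (P w * a (‖w - c‖ ^ 2)) * eb + (P w * b (‖w - z‖ ^ 2)) * ea +
    (a (‖w - c‖ ^ 2) * b (‖w - z‖ ^ 2) * deriv P w) * Complex.I_mul_I

lemma exists_cutoff (s t : ℝ) (h : s < t) : ∃ a : ℝ → ℝ, ContDiff ℝ 1 a ∧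
    (∀ x ≤ s, a x = 0) ∧ (∀ x, t ≤ x → a x = 1) := by
  refine ⟨fun x => Real.smoothTransition ((x - s) / (t - s)), ?_, ?_, ?_⟩
  · exact (Real.smoothTransition.contDiff (n := 1)).comp (by fun_prop)
  · intro x hx
    exact Real.smoothTransition.zero_of_nonpos (div_nonpos_of_nonpos_of_nonneg (by linarith) (by linarith))
  · intro x hx
    exact Real.smoothTransition.one_of_one_le ((one_le_div (by linarith)).2 (by linarith))

lemma exists_kernel (e : ℝ) (h : 0 < e) : ∃ k : ℝ → ℝ, ContDiff ℝ 1 k ∧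
    (∀ x, e ≤ x → k x = x⁻¹) ∧ (∀ x, e ≤ x → deriv k x = - (x ^ 2)⁻¹) := by
  obtain ⟨a, ha, a0, a1⟩ := exists_cutoff (e / 4) (e / 2) (by linarith)
  refine ⟨fun x => a x * x⁻¹, ?_, ?_, ?_⟩
  · rw [contDiff_iff_contDiffAt]
    intro x
    by_cases hx : x < e / 4
    · refine (contDiffAt_const (c := (0:ℝ))).congr_of_eventuallyEq ?_
      filter_upwards [Iio_mem_nhds hx] with y hy
      rw [a0 y (le_of_lt hy), zero_mul]
    · exact ha.contDiffAt.mul (contDiffAt_inv ℝ (by linarith))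
  · intro x hx
    simp only []
    rw [a1 x (by linarith), one_mul]
  · intro x hx
    have : (fun x => a x * x⁻¹) =ᶠ[nhds x] fun x => x⁻¹ := by
      filter_upwards [Ioi_mem_nhds (show e / 2 < x by linarith)] with y hy
      rw [a1 y (le_of_lt hy), one_mul]
    rw [this.deriv_eq, deriv_inv]

lemma inv_normSq_mul (x : ℂ) : x * ((‖x‖ ^ 2)⁻¹ : ℝ) = ((starRingEnd ℂ) x)⁻¹ := by
  by_cases hx : x = 0
  · simp [hx]
  have hx' : (starRingEnd ℂ) x ≠ 0 := by simpa using hx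
  have := Complex.mul_conj' x
  push_cast
  rw [← this]
  field_simp

lemma core (φ : ℂ → ℂ)
    (hφ : DifferentiableOn ℂ φ (Metric.ball (0 : ℂ) 1))
    (hi : IntegrableOn φ (Metric.ball (0 : ℂ) 1) volume)
    (z : ℂ) (ε : ℝ) (hε : 0 < ε) (hzε : ‖z‖ + ε < 1) :
    ∫ w in Metric.ball (0 : ℂ) 1 \ Metric.ball z ε, φ w / (starRingEnd ℂ (w - z)) ^ 2 = 0 := by
  have hτ : (‖z‖ + ε) ^ 2 < 1 := by
    have := norm_nonneg z
    nlinarith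
  set τ := (‖z‖ + ε) ^ 2 with hτd
  obtain ⟨b, hb, b0, b1⟩ := exists_cutoff τ ((1 + τ) / 2) (by linarith)
  obtain ⟨k, hk, k1, k2⟩ := exists_kernel (ε ^ 2) (by positivity)
  set χ : ℝ → ℝ := fun x => 1 - b x with hχd
  have hχ : ContDiff ℝ 1 χ := contDiff_const.sub hb
  have χ1 : ∀ x ≤ τ, χ x = 1 := fun x hx => by simp [hχd, b0 x hx]
  have χ0 : ∀ x, (1 + τ) / 2 ≤ x → χ x = 0 := fun x hx => by simp [hχd, b1 x hx]
  have χd : ∀ x < τ, deriv χ x = 0 := fun x hx => by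
    have : χ =ᶠ[nhds x] fun _ => (1:ℝ) := by
      filter_upwards [Iio_mem_nhds hx] with y hy using χ1 y (le_of_lt hy)
    rw [this.deriv_eq, deriv_const]
  set u : ℂ → ℂ := fun w => (φ w * (w - z)) *
    ((χ (‖w - 0‖ ^ 2) : ℂ) * (k (‖w - z‖ ^ 2) : ℂ)) with hud
  have hopen : ∀ w : ℂ, ‖w‖ < 1 → Metric.ball (0:ℂ) 1 ∈ nhds w := fun w hw =>
    Metric.isOpen_ball.mem_nhds (by simpa using hw)
  have u0 : ∀ w : ℂ, (1 + τ) / 2 ≤ ‖w‖ ^ 2 → u w = 0 := fun w hw => by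
    simp [hud, χ0 _ hw]
  have u0' : ∀ w : ℂ, 1 ≤ ‖w‖ → u =ᶠ[nhds w] fun _ => 0 := fun w hw => by
    have : {y : ℂ | (1 + τ) / 2 < ‖y‖ ^ 2} ∈ nhds w :=
      (isOpen_lt continuous_const (by fun_prop)).mem_nhds (by
        show (1 + τ) / 2 < ‖w‖ ^ 2
        nlinarith)
    filter_upwards [this] with y hy using u0 y (le_of_lt hy)
  have hu : ContDiff ℝ 1 u := by
    rw [contDiff_iff_contDiffAt]
    intro w
    by_cases hw : ‖w‖ < 1
    · have h1 : ContDiffAt ℝ 1 φ w :=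
        ((hφ.analyticAt (hopen w hw)).contDiffAt (n := 1)).restrict_scalars ℝ
      have h2 : ContDiffAt ℝ 1 (fun w : ℂ => ((χ (‖w - 0‖ ^ 2) : ℝ) : ℂ)) w := by
        refine (Complex.ofRealCLM.contDiff.comp (hχ.comp ?_)).contDiffAt
        exact (contDiff_id.sub contDiff_const).norm_sq ℝ
      have h3 : ContDiffAt ℝ 1 (fun w : ℂ => ((k (‖w - z‖ ^ 2) : ℝ) : ℂ)) w := by
        refine (Complex.ofRealCLM.contDiff.comp (hk.comp ?_)).contDiffAt
        exact (contDiff_id.sub contDiff_const).norm_sq ℝ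
      exact (h1.mul (contDiffAt_id.sub contDiffAt_const)).mul (h2.mul h3)
    · exact contDiffAt_const.congr_of_eventuallyEq (u0' w (not_lt.1 hw))
  have huc : HasCompactSupport u := by
    refine HasCompactSupport.intro (isCompact_closedBall (0:ℂ) 1) fun w hw => ?_
    have : 1 < ‖w‖ := by simpa using hw
    exact (u0' w this.le).self_of_nhds
  obtain ⟨i1, e1⟩ := integral_fderiv_zero u hu huc 1
  obtain ⟨i2, e2⟩ := integral_fderiv_zero u hu huc Complex.I
  set DB : ℂ → ℂ := fun w => fderiv ℝ u w 1 + Complex.I * fderiv ℝ u w Complex.I with hDB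
  have iDB : Integrable DB := i1.add (i2.const_mul _)
  have eDB : ∫ w, DB w = 0 := by
    rw [hDB, integral_add i1 (i2.const_mul _), integral_const_mul, e1, e2]; simp
  have DB1 : ∀ w : ℂ, ‖w‖ < 1 → DB w = 2 * (φ w * (w - z)) *
      (((deriv χ (‖w‖ ^ 2) : ℝ) : ℂ) * w * (k (‖w - z‖ ^ 2) : ℂ)
        + (χ (‖w‖ ^ 2) : ℂ) * ((deriv k (‖w - z‖ ^ 2) : ℝ) : ℂ) * (w - z)) := by
    intro w hw
    have hd : DifferentiableAt ℂ φ w := hφ.differentiableAt (hopen w hw)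
    have := dbar_calc (fun w => φ w * (w - z)) χ k 0 z w
      (hd.mul (differentiableAt_id.sub_const z))
      (hχ.differentiable one_ne_zero _) (hk.differentiable one_ne_zero _)
    simp only [hDB, hud]
    simpa only [sub_zero] using this
  have DB0 : ∀ w : ℂ, 1 ≤ ‖w‖ → DB w = 0 := by
    intro w hw
    simp [hDB, (u0' w hw).fderiv_eq]
  set A := Metric.ball (0 : ℂ) 1 \ Metric.ball z ε with hA
  have mA : MeasurableSet A := measurableSet_ball.diff measurableSet_ball
  set F : ℂ → ℂ := A.indicator (fun w => φ w / (starRingEnd ℂ (w - z)) ^ 2) with hF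
  have iF : Integrable F := by
    rw [hF, integrable_indicator_iff mA]
    have h1 : IntegrableOn φ A := hi.mono_set Set.sdiff_subset
    simp only [div_eq_mul_inv]
    refine Integrable.mul_bdd (c := (ε ^ 2)⁻¹) h1 ?_ ?_
    · exact Measurable.aestronglyMeasurable (by fun_prop)
    · refine (ae_restrict_iff' mA).2 (Eventually.of_forall fun w hw => ?_)
      have : ε ≤ ‖w - z‖ := by
        have := hw.2
        simpa [dist_eq_norm] using this
      rw [norm_inv, norm_pow, RCLike.norm_conj]
      gcongr
  set T : ℂ → ℂ := fun w => 2 * F w + DB w with hT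
  have iT : Integrable T := (iF.const_mul 2).add iDB
  have eT : ∫ w, T w = 2 * ∫ w, F w := by
    rw [hT, integral_add (iF.const_mul 2) iDB, eDB, integral_const_mul, add_zero]
  have inB : ∀ w : ℂ, ‖w - z‖ < ε → ‖w‖ < ‖z‖ + ε := fun w hw => by
    have := norm_add_le (w - z) z
    rw [sub_add_cancel] at this
    linarith
  have inB2 : ∀ w : ℂ, ‖w - z‖ < ε → ‖w‖ ^ 2 < τ := fun w hw =>
    pow_lt_pow_left₀ (inB w hw) (norm_nonneg _) two_ne_zero
  have T1 : ∀ w : ℂ, ‖w - z‖ < ε →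
      T w = ((deriv k (‖w - z‖ ^ 2) : ℝ) : ℂ) * (2 * φ w * (w - z) ^ 2) := by
    intro w hw
    have : F w = 0 := Set.indicator_of_notMem (fun h => h.2 (by simpa [dist_eq_norm] using hw)) _
    simp only [hT]
    rw [this, DB1 w ((inB w hw).trans hzε), χd _ (inB2 w hw), χ1 _ (inB2 w hw).le]
    push_cast
    ring
  have T3 : ∀ w : ℂ, ε ≤ ‖w - z‖ → ‖w‖ < 1 →
      T w = 2 * φ w * (((deriv χ (‖w‖ ^ 2) : ℝ) : ℂ) * w * (starRingEnd ℂ (w - z))⁻¹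
        + ((1 - χ (‖w‖ ^ 2) : ℝ) : ℂ) * ((starRingEnd ℂ (w - z))⁻¹) ^ 2) := by
    intro w hw hw1
    have : F w = φ w / (starRingEnd ℂ (w - z)) ^ 2 := Set.indicator_of_mem
      (show w ∈ A from ⟨by simpa using hw1, by simpa [dist_eq_norm] using hw⟩) _
    have hle : ε ^ 2 ≤ ‖w - z‖ ^ 2 := by gcongr
    simp only [hT]
    rw [this, DB1 w hw1, k1 _ hle, k2 _ hle, div_eq_mul_inv, ← inv_pow, ← inv_normSq_mul]
    push_cast
    ring
  have hz2 : ∫ w, (Metric.ball z ε).indicator T w = 0 := by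
    refine integral_eq_zero_of_circleAverage _ z fun r hr => ?_
    by_cases hrε : r < ε
    · have : Real.circleAverage ((Metric.ball z ε).indicator T) z r =
          Real.circleAverage (fun w => ((deriv k (r ^ 2) : ℝ) : ℂ) * (2 * φ w * (w - z) ^ 2)) z r := by
        refine Real.circleAverage_congr_sphere fun w hw => ?_
        rw [abs_of_pos hr, mem_sphere_iff_norm] at hw
        rw [Set.indicator_of_mem (by simpa [dist_eq_norm, hw] using hrε), T1 w (by rw [hw]; exact hrε), hw]
      rw [this, DiffContOnCl.circleAverage]
      · simp
      · rw [abs_of_pos hr]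
        refine DifferentiableOn.diffContOnCl (DifferentiableOn.mono (t := Metric.ball 0 1) ?_ ?_)
        · fun_prop
        · rw [closure_ball z hr.ne']
          intro w hw
          have h1 : ‖w - z‖ ≤ r := by simpa [dist_eq_norm] using hw
          simpa using (inB w (h1.trans_lt hrε)).trans hzε
    · have : Real.circleAverage ((Metric.ball z ε).indicator T) z r =
          Real.circleAverage (fun w => (0:ℂ)) z r := by
        refine Real.circleAverage_congr_sphere fun w hw => ?_
        rw [abs_of_pos hr, mem_sphere_iff_norm] at hw
        rw [Set.indicator_of_notMem (by simpa [dist_eq_norm, hw] using hrε)]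
      rw [this]; simp [Real.circleAverage_def]
  have hz3 : ∫ w, ((Metric.ball z ε)ᶜ).indicator T w = 0 := by
    refine integral_eq_zero_of_circleAverage _ 0 fun r hr => ?_
    by_cases hr1 : ‖z‖ + ε ≤ r ∧ r < 1
    · obtain ⟨hr1, hr2⟩ := hr1
      have hden : ∀ w : ℂ, ‖w‖ ≤ r → (r:ℂ) ^ 2 - starRingEnd ℂ z * w ≠ 0 := by
        intro w hw h0
        have h1 : (r:ℂ) ^ 2 = starRingEnd ℂ z * w := sub_eq_zero.1 h0
        have h2 := congrArg norm h1
        rw [norm_mul, RCLike.norm_conj, norm_pow, Complex.norm_real, Real.norm_of_nonneg hr.le] at h2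
        have : ‖z‖ * ‖w‖ ≤ ‖z‖ * r := by gcongr
        nlinarith
      have : Real.circleAverage (((Metric.ball z ε)ᶜ).indicator T) 0 r =
          Real.circleAverage (fun w => 2 * φ w * (((deriv χ (r ^ 2) : ℝ) : ℂ) * w *
            (w / ((r:ℂ) ^ 2 - starRingEnd ℂ z * w))
        + ((1 - χ (r ^ 2) : ℝ) : ℂ) * (w / ((r:ℂ) ^ 2 - starRingEnd ℂ z * w)) ^ 2)) 0 r := by
        refine Real.circleAverage_congr_sphere fun w hw => ?_
        rw [abs_of_pos hr, mem_sphere_iff_norm, sub_zero] at hw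
        have hwz : ε ≤ ‖w - z‖ := by
          have := norm_sub_norm_le w z
          linarith
        have hinv : (starRingEnd ℂ (w - z))⁻¹ = w / ((r:ℂ) ^ 2 - starRingEnd ℂ z * w) := by
          have hw0 : w ≠ 0 := by
            rintro rfl
            simp at hw
            linarith
          have h1 : (r:ℂ) ^ 2 - starRingEnd ℂ z * w = w * starRingEnd ℂ (w - z) := by
            rw [← hw, ← Complex.mul_conj', map_sub]; ring
          rw [h1, div_mul_eq_div_div, div_self hw0, one_div]
        rw [Set.indicator_of_mem (by simpa [dist_eq_norm] using hwz),
          T3 w hwz (by rw [hw]; exact hr2), hw, hinv]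
      rw [this, DiffContOnCl.circleAverage]
      · simp
      · rw [abs_of_pos hr]
        refine DifferentiableOn.diffContOnCl ?_
        rw [closure_ball 0 hr.ne']
        have h1 : DifferentiableOn ℂ φ (Metric.closedBall 0 r) :=
          hφ.mono (Metric.closedBall_subset_ball hr2)
        have h2 : DifferentiableOn ℂ (fun w => w / ((r:ℂ) ^ 2 - starRingEnd ℂ z * w))
            (Metric.closedBall 0 r) := by
          refine DifferentiableOn.div (by fun_prop) (by fun_prop) fun w hw => hden w (by simpa using hw)
        exact (h1.const_mul 2).mul (((differentiableOn_id.const_mul _).mul h2).add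
          ((h2.pow 2).const_mul _))
    · have : Real.circleAverage (((Metric.ball z ε)ᶜ).indicator T) 0 r =
          Real.circleAverage (fun w => (0:ℂ)) 0 r := by
        refine Real.circleAverage_congr_sphere fun w hw => ?_
        rw [abs_of_pos hr, mem_sphere_iff_norm, sub_zero] at hw
        by_cases hwz : ε ≤ ‖w - z‖
        · rw [Set.indicator_of_mem (by simpa [dist_eq_norm] using hwz)]
          by_cases hr2 : r < 1
          · have hr3 : r < ‖z‖ + ε := by
              by_contra h
              exact hr1 ⟨not_lt.1 h, hr2⟩
            have hr4 : ‖w‖ ^ 2 < τ := by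
              rw [hw]
              exact pow_lt_pow_left₀ hr3 hr.le two_ne_zero
            rw [T3 w hwz (by rw [hw]; exact hr2), χd _ hr4, χ1 _ hr4.le]
            simp
          · have h1 : 1 ≤ ‖w‖ := by rw [hw]; exact not_lt.1 hr2
            have : F w = 0 := Set.indicator_of_notMem (fun h => by
              have := h.1
              simp at this
              linarith) _
            simp only [hT]
            rw [this, DB0 w h1]; simp
        · rw [Set.indicator_of_notMem (by simpa [dist_eq_norm] using hwz)]
      rw [this]; simp [Real.circleAverage_def]
  have hsum := integral_add_compl (s := Metric.ball z ε) measurableSet_ball iT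
  rw [← integral_indicator measurableSet_ball, ← integral_indicator measurableSet_ball.compl,
    hz2, hz3, eT] at hsum
  rw [← integral_indicator mA]
  have h2 : (2:ℂ) * ∫ w, F w = 0 := by rw [← hsum]; simp
  exact (mul_eq_zero.1 h2).resolve_left two_ne_zero

theorem stmt1 (φ : ℂ → ℂ)
    (hφ : DifferentiableOn ℂ φ (Metric.ball (0 : ℂ) 1))
    (hL2 : IntegrableOn (fun w => ‖φ w‖ ^ 2) (Metric.ball (0 : ℂ) 1) volume)
    (z : ℂ) (hz : z ∈ Metric.ball (0 : ℂ) 1) :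
    Tendsto (fun ε : ℝ =>
        ∫ w in Metric.ball (0 : ℂ) 1 \ Metric.ball z ε,
          (starRingEnd ℂ) (φ w) / (z - w) ^ 2)
      (nhdsWithin 0 (Set.Ioi 0)) (nhds 0) := by
  have hz1 : ‖z‖ < 1 := by simpa using hz
  have hi : IntegrableOn φ (Metric.ball (0 : ℂ) 1) volume := by
    have hfin : volume (Metric.ball (0 : ℂ) 1) ≠ ⊤ := measure_ball_lt_top.ne
    have h1 : IntegrableOn (fun w => 1 + ‖φ w‖ ^ 2) (Metric.ball (0 : ℂ) 1) volume :=
      (integrableOn_const hfin).add hL2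
    refine Integrable.mono' h1 (hφ.continuousOn.aestronglyMeasurable measurableSet_ball)
      (Eventually.of_forall fun w => ?_)
    nlinarith [sq_nonneg (‖φ w‖ - 1), sq_nonneg (‖φ w‖)]
  refine tendsto_const_nhds.congr' ?_
  filter_upwards [Ioo_mem_nhdsGT (show (0:ℝ) < 1 - ‖z‖ by linarith)] with ε hε
  have h := core φ hφ hi z ε hε.1 (by linarith [hε.2])
  have h2 := congrArg (starRingEnd ℂ) h
  rw [← integral_conj, map_zero] at h2
  refine h2.symm.trans (integral_congr_ae (Eventually.of_forall fun w => ?_))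
  simp only [map_div₀, map_pow, Complex.conj_conj]
  rw [← neg_sub w z, neg_sq]
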